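/- For every infinite cardinal κ < 𝔠 there is a family (X_α)_{α ∈ I} of subsets of 2^ω, indexed by a set I of cardinality κ, such that |X_α| = 𝔠 for every α ∈ I and for all distinct α, β ∈ I there is no surjection g : 2^{<ω} → 2^{<ω} with g[S_{𝒜_{X_β}}] = S_{𝒜_{X_α}}; that is, the filters S_{𝒜_{X_α}} form an RK-antichain. -/

import Mathlib

open Set

/-- `f[G] = {A : f⁻¹(A) ∈ G}`, the image (Rudin–Keisler) filter of a family of sets. -/
def mapFilter {α β : Type*} (f : α → β) (G : Set (Set α)) : Set (Set β) := {A | f ⁻¹' A ∈ G}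

/-- `F` is a (proper) filter of subsets. -/
def IsFilterFam {α : Type*} (F : Set (Set α)) : Prop :=
  Set.univ ∈ F ∧ (∀ A ∈ F, ∀ B : Set α, A ⊆ B → B ∈ F) ∧ (∀ A ∈ F, ∀ B ∈ F, A ∩ B ∈ F)

/-- A free filter: a proper filter containing all cofinite sets. -/
def IsFreeFilter {α : Type*} (F : Set (Set α)) : Prop :=
  IsFilterFam F ∧ (∀ A : Set α, Aᶜ.Finite → A ∈ F) ∧ ∅ ∉ F

/-- `S → F` : `S` is an infinite set converging to the filter `F`, i.e. `S ⊆* A` for all `A ∈ F`. -/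
def ConvTo {α : Type*} (S : Set α) (F : Set (Set α)) : Prop :=
  S.Infinite ∧ ∀ A ∈ F, (S \ A).Finite

/-- `F` is relatively equivalent to the Fréchet filter: some `A ∈ F` converges to `F`. -/
def RelFrechet {α : Type*} (F : Set (Set α)) : Prop := ∃ A ∈ F, ConvTo A F

/-- Rudin–Keisler order: `F ≤_RK G` iff `f[G] = F` for some surjection `f`. -/
def RKle {α : Type*} (F G : Set (Set α)) : Prop :=
  ∃ f : α → α, Function.Surjective f ∧ mapFilter f G = F

/-- `F ≈ G` : there is a bijection `f` with `f[F] = G`. -/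
def EquivFilter {α : Type*} (F G : Set (Set α)) : Prop :=
  ∃ f : α → α, Function.Bijective f ∧ mapFilter f F = G

/-- `F <_RK G` : `F ≤_RK G` and `¬ (F ≈ G)`. -/
def RKlt {α : Type*} (F G : Set (Set α)) : Prop := RKle F G ∧ ¬ EquivFilter F G

/-- An AD-family: an infinite family of infinite sets with pairwise finite intersections. -/
def IsADFamily {α : Type*} (𝒜 : Set (Set α)) : Prop :=
  𝒜.Infinite ∧ (∀ A ∈ 𝒜, A.Infinite) ∧ ∀ A ∈ 𝒜, ∀ B ∈ 𝒜, A ≠ B → (A ∩ B).Finite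

/-- The ideal generated by a family `𝒜`: sets almost covered by finitely many members of `𝒜`. -/
def idealGen {α : Type*} (𝒜 : Set (Set α)) : Set (Set α) :=
  {X | ∃ 𝒜' : Finset (Set α), ↑𝒜' ⊆ 𝒜 ∧ (X \ ⋃₀ ↑𝒜').Finite}

/-- `S_𝒜`: the filter dual to the ideal generated by `𝒜`. -/
def SFam {α : Type*} (𝒜 : Set (Set α)) : Set (Set α) := {F | Fᶜ ∈ idealGen 𝒜}

/-- `F_𝒟 = {F : D ⊆* F for every D ∈ 𝒟}`. -/
def FFam {α : Type*} (𝒟 : Set (Set α)) : Set (Set α) := {F | ∀ D ∈ 𝒟, (D \ F).Finite}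

/-- A nowhere MAD family: every set outside the generated ideal contains an infinite set
almost disjoint from every member of `𝒜`. -/
def IsNMAD {α : Type*} (𝒜 : Set (Set α)) : Prop :=
  IsADFamily 𝒜 ∧ ∀ X : Set α, X ∉ idealGen 𝒜 →
    ∃ B ⊆ X, B.Infinite ∧ ∀ A ∈ 𝒜, (B ∩ A).Finite

/-- A partition of `ℕ` into infinitely many infinite sets. -/
def IsInfPartition (𝒬 : Set (Set ℕ)) : Prop :=
  𝒬.Infinite ∧ (∀ P ∈ 𝒬, P.Infinite) ∧ ⋃₀ 𝒬 = Set.univ ∧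
    ∀ P ∈ 𝒬, ∀ Q ∈ 𝒬, P ≠ Q → P ∩ Q = ∅

/-- `F` is a Fréchet–Urysohn filter: every `F`-positive set contains a sequence converging to `F`. -/
def IsFUFilter {α : Type*} (F : Set (Set α)) : Prop :=
  ∀ A : Set α, Aᶜ ∉ F → ∃ S ⊆ A, ConvTo S F

/-- The trace filter `F|_A = {G ∩ A : G ∈ F}`. -/
def traceFam {α : Type*} (F : Set (Set α)) (A : Set α) : Set (Set α) := {S | ∃ G ∈ F, S = G ∩ A}

/-- Todorčević–Uzcátegui order: there are `A ∈ G⁺`, `B ∈ F` and a bijection `f : A → B`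
with `f[G|_A] = F|_B`. -/
def TUle {α : Type*} (F G : Set (Set α)) : Prop :=
  ∃ A : Set α, Aᶜ ∉ G ∧ ∃ B ∈ F, ∃ f : α → α, Set.BijOn f A B ∧
    {Y : Set α | Y ⊆ B ∧ A ∩ f ⁻¹' Y ∈ traceFam G A} = traceFam F B

/-- The branch of the Cantor tree `2^{<ω}` determined by `x ∈ 2^ω`:
the set of all initial segments of `x`. -/
def branch (x : ℕ → Bool) : Set (List Bool) :=
  Set.range (fun n => List.ofFn (fun i : Fin n => x i))

/-!
Call `u` and `v` `g`-related if `A_v ∩ g⁻¹(A_u)` is infinite. If `g[S_{𝒜_Y}] = S_{𝒜_X}`, then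
`u ∈ X` forces every `v` that is `g`-related to `u` to lie in `Y`, so a single related pair with
`u ∈ X` and `v ∉ Y` rules out `g`.

Such pairs are abundant: if every related pair met a set `D` with `|D| < |X| = 𝔠`, each `g⁻¹(A_u)`
with `u ∈ X \ D` would be almost covered by finitely many branches with index in `D`, and by the
pigeonhole principle infinitely many of these preimages would be almost covered by the same
`U ∈ I(𝒜_Y)`. Then `{t : g⁻¹(t) ⊆ U}` would belong to `I(𝒜_X)` although it almost contains
infinitely many `A_u`.

A transfinite recursion over the triples `(g, i, ε)` with `ε ∈ {0, 1}` therefore picks related pairs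
of new points `u_{g,i,ε}`, `v_{g,i,ε}`. For `a : 2^ω → {0, 1}` let `X_a = {u_{g,i,a(i)}}`. If
`a(i) = ε ≠ a'(i)`, then `u_{g,i,ε} ∈ X_a` and `v_{g,i,ε} ∉ X_{a'}`, so the `2^𝔠` sets `X_a` give
an antichain.
-/

open scoped Cardinal

universe u v

section Cardinality

theorem mk_finset_lt {α : Type u} {c : Cardinal.{u}} (hc : ℵ₀ ≤ c) (hα : #α < c) :
    #(Finset α) < c := by
  rcases finite_or_infinite α with _ | _
  · exact Cardinal.mk_lt_aleph0.trans_le hc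
  · rwa [Cardinal.mk_finset_of_infinite]

theorem mk_sdiff_of_mk_lt {α : Type u} {A D : Set α} (hA : ℵ₀ ≤ #A) (hD : #D < #A) :
    #(A \ D : Set α) = #A := by
  refine (Cardinal.mk_le_mk_of_subset sdiff_subset).antisymm (not_lt.1 fun hlt => ?_)
  exact (Cardinal.le_mk_sdiff_add_mk A D).not_gt (Cardinal.add_lt_of_lt hA hlt hD)

end Cardinality

section Diagonalisation

/-- A relation on `ι` such that no set `D` of fewer than `#ι` points meets all related pairs, so
that related pairs remain available at every stage of a transfinite recursion of length `#ι`. -/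
def HasNoSmallVertexCover {ι : Type u} (R : ι → ι → Prop) : Prop :=
  ∀ D : Set ι, #D < #ι → ∃ x ∉ D, ∃ y ∉ D, R x y

theorem exists_forall_image_Iio {J V : Type u} [LinearOrder J] [WellFoundedLT J] {c : Cardinal.{u}}
    (hJ : ∀ j : J, #(Iio j) < c) {P : J → Set V → V → Prop}
    (hP : ∀ j (s : Set V), #s < c → ∃ v, P j s v) :
    ∃ f : J → V, ∀ j, P j (f '' Iio j) (f j) := by
  have hnext (j : J) (p : ∀ i, i < j → V) : ∃ v, P j (range fun i : Iio j => p i i.2) v :=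
    hP j _ (Cardinal.mk_range_le.trans_lt (hJ j))
  choose next hnext using hnext
  let f : J → V := wellFounded_lt.fix next
  have f_eq (j : J) : f j = next j fun i _ => f i := wellFounded_lt.fix_eq next j
  refine ⟨f, fun j => ?_⟩
  rw [f_eq j, image_eq_range]
  exact hnext j fun i _ => f i

theorem exists_notMem_imp_rel {ι : Type u} (R : ι → ι → Prop) {D : Set ι}
    (hD : #D < #ι) :
    ∃ x ∉ D, ∃ y ∉ D, HasNoSmallVertexCover R → R x y := by
  by_cases hR : HasNoSmallVertexCover R
  · obtain ⟨x, hx, y, hy, hxy⟩ := hR D hD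
    exact ⟨x, hx, y, hy, fun _ => hxy⟩
  · obtain ⟨x, hx⟩ : ∃ x, x ∉ D := by
      by_contra! hall
      rw [eq_univ_of_forall hall, Cardinal.mk_univ] at hD
      exact hD.false
    exact ⟨x, hx, x, hx, fun h => absurd h hR⟩

theorem exists_injective_forall_rel {ι J : Type u} [Infinite ι] (hJ : #J ≤ #ι)
    (R : J → ι → ι → Prop) :
    ∃ x y : J → ι, Function.Injective x ∧ (∀ i j, x i = y j → i = j) ∧
      ∀ j, HasNoSmallVertexCover (R j) → R j (x j) (y j) := by
  obtain ⟨_, _, hord⟩ := Cardinal.exists_ord_eq_type_lt J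
  let used (s : Set (ι × ι)) : Set ι := Prod.fst '' s ∪ Prod.snd '' s
  have mk_used_lt (s : Set (ι × ι)) (hs : #s < #ι) : #(used s) < #ι :=
    (Cardinal.mk_union_le _ _).trans_lt <| Cardinal.add_lt_of_lt (Cardinal.aleph0_le_mk ι)
      (Cardinal.mk_image_le.trans_lt hs) (Cardinal.mk_image_le.trans_lt hs)
  obtain ⟨f, hf⟩ := exists_forall_image_Iio (V := ι × ι) (c := #ι)
    (P := fun j s p => p.1 ∉ used s ∧ p.2 ∉ used s ∧ (HasNoSmallVertexCover (R j) → R j p.1 p.2))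
    (fun j => (Cardinal.mk_Iio_lt j hord).trans_le hJ)
    (fun j s hs => by
      obtain ⟨x, hx, y, hy, hxy⟩ := exists_notMem_imp_rel (R j) (mk_used_lt s hs)
      exact ⟨(x, y), hx, hy, hxy⟩)
  have fst_mem_used {i j : J} (hij : i < j) : (f i).1 ∈ used (f '' Iio j) :=
    .inl (mem_image_of_mem _ (mem_image_of_mem f hij))
  have snd_mem_used {i j : J} (hij : i < j) : (f i).2 ∈ used (f '' Iio j) :=
    .inr (mem_image_of_mem _ (mem_image_of_mem f hij))
  have fst_injective : Function.Injective fun j => (f j).1 :=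
    Function.Injective.of_lt_imp_ne fun _ j hij => ne_of_mem_of_not_mem (fst_mem_used hij) (hf j).1
  refine ⟨fun j => (f j).1, fun j => (f j).2, fst_injective, fun i j hij => ?_,
    fun j => (hf j).2.2⟩
  by_contra hne
  rcases lt_or_gt_of_ne hne with hlt | hgt
  · exact ne_of_mem_of_not_mem (fst_mem_used hlt) (hf j).2.1 hij
  · exact ne_of_mem_of_not_mem (snd_mem_used hgt) (hf i).1 hij.symm

end Diagonalisation

section Ideal

variable {ι S T : Type*}

theorem idealGen_mono {𝒜 ℬ : Set (Set T)} (h : 𝒜 ⊆ ℬ) : idealGen 𝒜 ⊆ idealGen ℬ :=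
  fun _ ⟨F, hF, hfin⟩ => ⟨F, hF.trans h, hfin⟩

theorem mem_idealGen_of_subset {𝒜 : Set (Set T)} {Y Z : Set T} (hYZ : Y ⊆ Z)
    (hZ : Z ∈ idealGen 𝒜) : Y ∈ idealGen 𝒜 :=
  let ⟨F, hF, hfin⟩ := hZ
  ⟨F, hF, hfin.subset (sdiff_subset_sdiff_left hYZ)⟩

theorem mem_idealGen_of_mem {𝒜 : Set (Set T)} {Y : Set T} (hY : Y ∈ 𝒜) : Y ∈ idealGen 𝒜 :=
  ⟨{Y}, by simpa using hY, by simp⟩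

theorem mem_idealGen_image {b : ι → Set T} {X : Set ι} {Y : Set T} :
    Y ∈ idealGen (b '' X) ↔ ∃ F : Finset ι, ↑F ⊆ X ∧ (Y \ ⋃ x ∈ F, b x).Finite := by
  classical
  simp only [idealGen, mem_ofPred_eq, Finset.subset_set_image_iff]
  constructor
  · rintro ⟨_, ⟨F, hF, rfl⟩, hfin⟩
    exact ⟨F, hF, by simpa [sUnion_image] using hfin⟩
  · rintro ⟨F, hF, hfin⟩
    exact ⟨_, ⟨F, hF, rfl⟩, by simpa [sUnion_image] using hfin⟩

theorem mem_idealGen_range {b : ι → Set T} {Y : Set T} :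
    Y ∈ idealGen (range b) ↔ ∃ F : Finset ι, (Y \ ⋃ x ∈ F, b x).Finite := by
  simp [← image_univ, mem_idealGen_image]

theorem mem_idealGen_image_inter {b : ι → Set T} {X D : Set ι} {Y : Set T}
    (hY : Y ∈ idealGen (b '' X)) (hD : ∀ x ∈ X \ D, (b x ∩ Y).Finite) :
    Y ∈ idealGen (b '' (X ∩ D)) := by
  classical
  obtain ⟨F, hFX, hfin⟩ := mem_idealGen_image.1 hY
  have houtside : (⋃ x ∈ (F : Set ι) \ D, b x ∩ Y).Finite :=
    F.finite_toSet.sdiff.biUnion fun x hx => hD x ⟨hFX hx.1, hx.2⟩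
  refine mem_idealGen_image.2 ⟨F.filter (· ∈ D), fun x hx => ?_,
    (hfin.union houtside).subset fun t ht => ?_⟩
  · rw [Finset.coe_filter] at hx
    exact ⟨hFX hx.1, hx.2⟩
  · simp only [mem_sdiff, mem_union, mem_iUnion, mem_inter_iff, Finset.mem_filter,
      Finset.mem_coe] at ht ⊢
    grind

theorem preimage_mem_idealGen_iff {g : S → T} {𝒞 : Set (Set S)} {ℬ : Set (Set T)}
    (h : mapFilter g (SFam 𝒞) = SFam ℬ) {Y : Set T} :
    g ⁻¹' Y ∈ idealGen 𝒞 ↔ Y ∈ idealGen ℬ := by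
  simpa [mapFilter, SFam] using Set.ext_iff.1 h Yᶜ

end Ideal

/-- An indexed family of infinite sets with pairwise finite intersections. Unlike `IsADFamily`, it
may have a finite index type; indexing identifies subfamilies with sets of indices. -/
structure IsAlmostDisjoint {ι T : Type*} (b : ι → Set T) : Prop where
  infinite (i : ι) : (b i).Infinite
  finite_inter : Pairwise fun i j => (b i ∩ b j).Finite

namespace IsAlmostDisjoint

section

variable {ι S T : Type*} {b : ι → Set T}

theorem mem_of_infinite_inter (hb : IsAlmostDisjoint b) {Y : Set T} {F : Finset ι}
    (hF : (Y \ ⋃ x ∈ F, b x).Finite) {i : ι} (hi : (b i ∩ Y).Infinite) : i ∈ F := by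
  by_contra hiF
  have hinter : (⋃ x ∈ F, b x ∩ b i).Finite :=
    F.finite_toSet.biUnion fun x hx => hb.finite_inter (ne_of_mem_of_not_mem hx hiF)
  refine hi ((hF.union hinter).subset fun t ⟨hti, htY⟩ => ?_)
  by_cases ht : t ∈ ⋃ x ∈ F, b x
  · rw [← iUnion₂_inter]
    exact .inr ⟨ht, hti⟩
  · exact .inl ⟨htY, ht⟩

theorem mem_of_infinite_inter_of_mem_idealGen (hb : IsAlmostDisjoint b) {X : Set ι} {Y : Set T}
    (hY : Y ∈ idealGen (b '' X)) {i : ι} (hi : (b i ∩ Y).Infinite) : i ∈ X :=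
  let ⟨_, hFX, hfin⟩ := mem_idealGen_image.1 hY
  hFX (hb.mem_of_infinite_inter hfin hi)

theorem finite_setOf_finite_preimage_sdiff (hb : IsAlmostDisjoint b) {g : S → T}
    {𝒞 : Set (Set S)} {A : Set ι} (h : mapFilter g (SFam 𝒞) = SFam (b '' A)) {U : Set S}
    (hU : U ∈ idealGen 𝒞) : {x | (g ⁻¹' b x \ U).Finite}.Finite := by
  have hker : kernImage g U ∈ idealGen (b '' A) :=
    (preimage_mem_idealGen_iff h).1 <|
      mem_idealGen_of_subset (subset_kernImage_iff.1 Subset.rfl) hU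
  obtain ⟨F, -, hF⟩ := mem_idealGen_image.1 hker
  refine F.finite_toSet.subset fun x (hx : (g ⁻¹' b x \ U).Finite) =>
    hb.mem_of_infinite_inter hF ?_
  have hsdiff : (b x \ kernImage g U).Finite := by
    refine (hx.image g).subset ?_
    rintro t ⟨htb, htU⟩
    rw [kernImage_eq_compl, notMem_compl_iff] at htU
    obtain ⟨s, hsU, rfl⟩ := htU
    exact mem_image_of_mem g ⟨htb, hsU⟩
  simpa only [sdiff_sdiff_right_self] using! (hb.infinite x).sdiff hsdiff

end

section

variable {ι κ : Type u} {S T : Type*} {b : ι → Set T}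

theorem exists_infinite_inter_preimage (hb : IsAlmostDisjoint b) {c : κ → Set S} {g : S → T}
    {A : Set ι} {B : Set κ} (h : mapFilter g (SFam (c '' B)) = SFam (b '' A)) {E : Set ι}
    (hEA : E ⊆ A) [Infinite E] {D : Set κ} (hDE : #D < #E) :
    ∃ x ∈ E, ∃ y ∈ B \ D, (c y ∩ g ⁻¹' b x).Infinite := by
  by_contra! hfin
  have hcover (x : E) : ∃ F : Finset (B ∩ D : Set κ), (g ⁻¹' b x \ ⋃ y ∈ F, c y).Finite := by
    have hx : g ⁻¹' b x ∈ idealGen (c '' B) :=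
      (preimage_mem_idealGen_iff h).2 (mem_idealGen_of_mem (mem_image_of_mem b (hEA x.2)))
    simpa only [image_eq_range, mem_idealGen_range] using
      mem_idealGen_image_inter hx (hfin x x.2)
  choose cover hcover using hcover
  have hcard : #(Finset (B ∩ D : Set κ)) < #E :=
    mk_finset_lt (Cardinal.aleph0_le_mk E)
      ((Cardinal.mk_le_mk_of_subset inter_subset_right).trans_lt hDE)
  obtain ⟨F, hF⟩ := Cardinal.exists_infinite_fiber cover hcard
  have hU : (⋃ y ∈ F, c y) ∈ idealGen (c '' B) := by
    refine idealGen_mono (image_mono (inter_subset_left (t := D))) ?_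
    rw [image_eq_range, mem_idealGen_range]
    exact ⟨F, by simp⟩
  refine (infinite_coe_iff.1 hF) ?_
  refine ((hb.finite_setOf_finite_preimage_sdiff h hU).preimage
    Subtype.val_injective.injOn).subset ?_
  rintro x rfl
  exact hcover x

theorem hasNoSmallVertexCover [Infinite ι] (hb : IsAlmostDisjoint b) {c : ι → Set S} {g : S → T}
    {A B : Set ι} (hA : #A = #ι) (h : mapFilter g (SFam (c '' B)) = SFam (b '' A)) :
    HasNoSmallVertexCover fun x y => (c y ∩ g ⁻¹' b x).Infinite := by
  intro D hD
  have hcard : #(A \ D : Set ι) = #ι :=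
    (mk_sdiff_of_mk_lt (hA ▸ Cardinal.aleph0_le_mk ι) (hA ▸ hD)).trans hA
  have : Infinite (A \ D : Set ι) :=
    Cardinal.infinite_iff.2 (hcard ▸ Cardinal.aleph0_le_mk ι)
  obtain ⟨x, hx, y, hy, hxy⟩ :=
    hb.exists_infinite_inter_preimage h sdiff_subset (hD.trans_eq hcard.symm)
  exact ⟨x, hx.2, y, hy.2, hxy⟩

end

section Antichain

variable {ι T : Type u} {b : ι → Set T}

theorem infinite_index (hb : IsAlmostDisjoint b) (hT : #(T → T) ≤ #ι) : Infinite ι := by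
  obtain ⟨i⟩ : Nonempty ι :=
    Cardinal.mk_ne_zero_iff.1 ((Cardinal.mk_ne_zero_iff.2 ⟨id⟩).bot_lt.trans_le hT).ne'
  have : Infinite T := infinite_univ_iff.1 ((hb.infinite i).mono (subset_univ _))
  exact Cardinal.infinite_iff.2 ((Cardinal.aleph0_le_mk (T → T)).trans hT)

theorem exists_mapFilter_antichain (hb : IsAlmostDisjoint b) (hT : #(T → T) ≤ #ι) :
    ∃ X : (ι → Bool) → Set ι, (∀ a, #(X a) = #ι) ∧
      ∀ a a', a ≠ a' → ∀ g : T → T, mapFilter g (SFam (b '' X a')) ≠ SFam (b '' X a) := by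
  have := hb.infinite_index hT
  have htasks : #((T → T) × ι × Bool) ≤ #ι := by
    have hι := Cardinal.aleph0_le_mk ι
    simp only [Cardinal.mk_prod, Cardinal.lift_id, Cardinal.lift_uzero, Cardinal.mk_bool,
      Cardinal.lift_ofNat]
    exact Cardinal.mul_le_of_le hι hT
      (Cardinal.mul_le_of_le hι le_rfl (Cardinal.ofNat_lt_aleph0.le.trans hι))
  obtain ⟨x, y, hx, hxy, hrel⟩ := exists_injective_forall_rel htasks
    fun j u v => (b v ∩ j.1 ⁻¹' b u).Infinite
  let X (a : ι → Bool) : Set ι := range fun p : (T → T) × ι => x (p.1, p.2, a p.2)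
  have hX (a : ι → Bool) : #(X a) = #ι := by
    refine (Cardinal.mk_set_le _).antisymm (Cardinal.mk_le_of_injective
      (f := fun i => ⟨x (id, i, a i), mem_range_self (id, i)⟩) fun i j hij => ?_)
    exact congrArg (·.2.1) (hx (congrArg Subtype.val hij))
  refine ⟨X, hX, fun a a' haa' g hg => ?_⟩
  obtain ⟨i, hi⟩ := Function.ne_iff.1 haa'
  have hpair := hrel (g, i, a i) (hb.hasNoSmallVertexCover (hX a) hg)
  have hpre := (preimage_mem_idealGen_iff hg).2
    (mem_idealGen_of_mem (mem_image_of_mem b (mem_range_self (g, i))))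
  obtain ⟨⟨g', i'⟩, hy⟩ := hb.mem_of_infinite_inter_of_mem_idealGen hpre hpair
  have htask := hxy _ _ hy
  simp only [Prod.mk.injEq] at htask
  obtain ⟨-, rfl, ha⟩ := htask
  exact hi ha.symm

end Antichain

end IsAlmostDisjoint

theorem isAlmostDisjoint_branch : IsAlmostDisjoint branch where
  infinite x := infinite_range_of_injective fun m n h => by simpa using congrArg List.length h
  finite_inter x y hxy := by
    obtain ⟨k, hk⟩ := Function.ne_iff.1 hxy
    refine ((finite_Iic k).image fun n => List.ofFn fun i : Fin n => x i).subset ?_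
    rintro _ ⟨⟨n, rfl⟩, m, hm⟩
    obtain rfl : m = n := by simpa using congrArg List.length hm
    refine ⟨m, mem_Iic.2 (not_lt.1 fun hkm => hk ?_), rfl⟩
    exact (congrFun (List.ofFn_injective hm) ⟨k, hkm⟩).symm

theorem statement19_general {I : Type v} {ι T : Type u} {b : ι → Set T} (hb : IsAlmostDisjoint b)
    (hT : #(T → T) ≤ #ι) (hI : Cardinal.lift.{u} #I ≤ Cardinal.lift.{v} (2 ^ #ι)) :
    ∃ X : I → Set ι, (∀ α, #(X α) = #ι) ∧
      ∀ α β, α ≠ β → ∀ g : T → T, mapFilter g (SFam (b '' X β)) ≠ SFam (b '' X α) := by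
  obtain ⟨X, hX, hanti⟩ := hb.exists_mapFilter_antichain hT
  obtain ⟨code⟩ : Nonempty (I ↪ (ι → Bool)) :=
    Cardinal.lift_mk_le'.1 (by simpa using hI)
  exact ⟨X ∘ code, fun α => hX _, fun α β hαβ => hanti _ _ (code.injective.ne hαβ)⟩

/-- For every infinite cardinal `κ < 𝔠` there is a κ-indexed RK-antichain of filters
`S_{𝒜_{X_α}}` with each `|X_α| = 𝔠`. -/
theorem statement19 (κ : Cardinal) (hκ : Cardinal.aleph0 ≤ κ)
    (hlt : κ < Cardinal.continuum) :
    ∃ (I : Type) (X : I → Set (ℕ → Bool)),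
      Cardinal.mk I = κ ∧
      (∀ α : I, Cardinal.mk ↥(X α) = Cardinal.continuum) ∧
      ∀ α β : I, α ≠ β →
        ¬ ∃ g : List Bool → List Bool, Function.Surjective g ∧
            mapFilter g (SFam (branch '' X β)) = SFam (branch '' X α) := by
  induction κ using Cardinal.inductionOn with | _ I
  obtain ⟨X, hX, hanti⟩ := statement19_general (I := I) isAlmostDisjoint_branch (by simp)
    (by simpa using hlt.le.trans (Cardinal.cantor 𝔠).le)
  exact ⟨I, X, rfl, fun α => (hX α).trans (by simp),
    fun α β hαβ ⟨g, _, hg⟩ => hanti α β hαβ g hg⟩
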